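/- Let n, Δ, k ∈ ℕ with Δ ≤ n. Set 𝓣 = 𝒯_{n−Δ} × 𝒯ₙ ⊆ V and (n₁, n₂) = (n−Δ, n). Let 𝐓 be a matrix differential operator whose components satisfy T_{ab} = Σ_{i+j ≤ n_b} M_{f^{ab}_{ij}} ∘ D_x^i ∘ D_y^j with all f^{ab}_{ij} = 0 for i + j > k, and suppose 𝐓 preserves 𝓣. Then 𝐓 is a ℂ-linear combination of compositions of elements of the generating set G = {T¹, …, T⁸, J} ∪ {Q⁻_{αβ} : α+β ≤ Δ} ∪ {Q⁺_{αβ} : α+β ≤ Δ} ∪ {id}, each composition being a matrix differential operator of order at most k. -/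

import Mathlib

noncomputable section

open MvPolynomial

/-- The bivariate polynomial ring `R = ℂ[x,y]`. -/
abbrev R2 : Type := MvPolynomial (Fin 2) ℂ

/-- The variable `x`. -/
def Xv : R2 := X 0

/-- The variable `y`. -/
def Yv : R2 := X 1

/-- The partial derivative `∂_x` as a `ℂ`-linear endomorphism. -/
def Dx : Module.End ℂ R2 := (pderiv (0 : Fin 2)).toLinearMap

/-- The partial derivative `∂_y` as a `ℂ`-linear endomorphism. -/
def Dy : Module.End ℂ R2 := (pderiv (1 : Fin 2)).toLinearMap

/-- Multiplication by `f` as an endomorphism. -/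
def Mf (f : R2) : Module.End ℂ R2 := LinearMap.mulLeft ℂ f

/-- All compositions (products) of at most `k` elements of `S`; the empty
composition is the identity. -/
def prodsLE (k : ℕ) (S : Set (Module.End ℂ R2)) : Set (Module.End ℂ R2) :=
  {T | ∃ l : List (Module.End ℂ R2), l.length ≤ k ∧ (∀ a ∈ l, a ∈ S) ∧ l.prod = T}

/-- The rectangular module `ℛ_{n,m}`. -/
def Rmod (n m : ℕ) : Submodule ℂ R2 :=
  Submodule.span ℂ {P : R2 | ∃ i j : ℕ, i ≤ n ∧ j ≤ m ∧ P = Xv ^ i * Yv ^ j}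

/-- The triangular module `𝒯ₙ`. -/
def Tmod (n : ℕ) : Submodule ℂ R2 :=
  Submodule.span ℂ {P : R2 | ∃ i j : ℕ, i + j ≤ n ∧ P = Xv ^ i * Yv ^ j}

/-- The staircase module `𝒮^r_{p,q}`. -/
def Smod (r p q : ℕ) : Submodule ℂ R2 :=
  Submodule.span ℂ {P : R2 | ∃ i j : ℕ, i + r * j ≤ p ∧ j ≤ q ∧ P = Xv ^ i * Yv ^ j}

/-- An endomorphism has nonpositive `y`-degree if it maps each monomial `xᵃyᵇ`
into the span of the monomials `x^c y^e` with `e ≤ b`. -/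
def NonposY (T : Module.End ℂ R2) : Prop :=
  ∀ a b : ℕ, T (Xv ^ a * Yv ^ b) ∈
    Submodule.span ℂ {P : R2 | ∃ c e : ℕ, e ≤ b ∧ P = Xv ^ c * Yv ^ e}

/-- `J¹ = M_{x²}∘D_x + M_{xy}∘D_y − a·M_x`. -/
def J1 (a : ℂ) : Module.End ℂ R2 := Mf (Xv ^ 2) * Dx + Mf (Xv * Yv) * Dy - a • Mf Xv

/-- `J² = M_{xy}∘D_x + M_{y²}∘D_y − a·M_y`. -/
def J2 (a : ℂ) : Module.End ℂ R2 := Mf (Xv * Yv) * Dx + Mf (Yv ^ 2) * Dy - a • Mf Yv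

/-- `J³ = M_y∘D_x`. -/
def J3 : Module.End ℂ R2 := Mf Yv * Dx

/-- `J⁴ = D_x`. -/
def J4 : Module.End ℂ R2 := Dx

/-- `J⁵ = D_y`. -/
def J5 : Module.End ℂ R2 := Dy

/-- `J⁶ = M_x∘D_y`. -/
def J6 : Module.End ℂ R2 := Mf Xv * Dy

/-- `J⁷ = M_x∘D_x − (a/3)·id`. -/
def J7 (a : ℂ) : Module.End ℂ R2 := Mf Xv * Dx - (a / 3) • 1

/-- `J⁸ = M_y∘D_y − (a/3)·id`. -/
def J8 (a : ℂ) : Module.End ℂ R2 := Mf Yv * Dy - (a / 3) • 1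

/-- The rank-2 space `V = R × R`. -/
abbrev V2 : Type := R2 × R2

/-- The matrix operator `𝐓(u,v) = (A u + B v, C u + D v)`. -/
def matOp (A B C D : Module.End ℂ R2) : Module.End ℂ V2 :=
  LinearMap.prod
    (A ∘ₗ LinearMap.fst ℂ R2 R2 + B ∘ₗ LinearMap.snd ℂ R2 R2)
    (C ∘ₗ LinearMap.fst ℂ R2 R2 + D ∘ₗ LinearMap.snd ℂ R2 R2)

/-- The diagonal matrix operator `diag(A, B)`. -/
def dg (A B : Module.End ℂ R2) : Module.End ℂ V2 := matOp A 0 0 B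

/-- The scalar differential operator with coefficients `f` supported on `F`. -/
def diffOp (F : Finset (ℕ × ℕ)) (f : ℕ × ℕ → R2) : Module.End ℂ R2 :=
  ∑ ij ∈ F, Mf (f ij) * Dx ^ ij.1 * Dy ^ ij.2

/-- The index set `{(i,j) : i + j ≤ k}`. -/
def ordIdx (k : ℕ) : Finset (ℕ × ℕ) :=
  (Finset.range (k + 1) ×ˢ Finset.range (k + 1)).filter (fun ij => ij.1 + ij.2 ≤ k)

/-- A scalar differential operator with polynomial coefficients, of order at most `k`. -/
def IsDiffOpLE (A : Module.End ℂ R2) (k : ℕ) : Prop :=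
  ∃ f : ℕ × ℕ → R2, A = diffOp (ordIdx k) f

/-- A matrix differential operator of order at most `k`. -/
def IsMatDiffOpLE (P : Module.End ℂ V2) (k : ℕ) : Prop :=
  ∃ A B C D : Module.End ℂ R2, IsDiffOpLE A k ∧ IsDiffOpLE B k ∧ IsDiffOpLE C k ∧
    IsDiffOpLE D k ∧ P = matOp A B C D

/-- Compositions of elements of `S` which are matrix differential operators of
order at most `k`. -/
def matProdsOrd (k : ℕ) (S : Set (Module.End ℂ V2)) : Set (Module.End ℂ V2) :=
  {P | ∃ l : List (Module.End ℂ V2), (∀ a ∈ l, a ∈ S) ∧ l.prod = P ∧ IsMatDiffOpLE P k}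

/-- Compositions of at most `k` elements of `S`; the empty composition is the identity. -/
def matProdsLE (k : ℕ) (S : Set (Module.End ℂ V2)) : Set (Module.End ℂ V2) :=
  {P | ∃ l : List (Module.End ℂ V2), l.length ≤ k ∧ (∀ a ∈ l, a ∈ S) ∧ l.prod = P}

/-- `Tⁱ = diag(Jⁱ(n−Δ), Jⁱ(n))`. -/
def Tg1 (n Δ : ℕ) : Module.End ℂ V2 := dg (J1 ((n - Δ : ℕ) : ℂ)) (J1 (n : ℂ))
def Tg2 (n Δ : ℕ) : Module.End ℂ V2 := dg (J2 ((n - Δ : ℕ) : ℂ)) (J2 (n : ℂ))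
def Tg3 : Module.End ℂ V2 := dg J3 J3
def Tg4 : Module.End ℂ V2 := dg J4 J4
def Tg5 : Module.End ℂ V2 := dg J5 J5
def Tg6 : Module.End ℂ V2 := dg J6 J6
def Tg7 (n Δ : ℕ) : Module.End ℂ V2 := dg (J7 ((n - Δ : ℕ) : ℂ)) (J7 (n : ℂ))
def Tg8 (n Δ : ℕ) : Module.End ℂ V2 := dg (J8 ((n - Δ : ℕ) : ℂ)) (J8 (n : ℂ))

/-- `J = diag(((n+2Δ)/3)·id, (n/3)·id)`. -/
def Jgen (n Δ : ℕ) : Module.End ℂ V2 :=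
  dg ((((n : ℂ) + 2 * (Δ : ℂ)) / 3) • 1) (((n : ℂ) / 3) • 1)

/-- `Q⁻_{αβ}(u,v) = (0, x^α y^β · u)`. -/
def Qgm (α β : ℕ) : Module.End ℂ V2 := matOp 0 0 (Mf (Xv ^ α * Yv ^ β)) 0

/-- `q̄_{αβ} = (∏_{t=1}^{Δ−α−β}(M_x∘D_x + M_y∘D_y − (n−Δ+t)·id)) ∘ D_x^α ∘ D_y^β`. -/
def qbar (n Δ α β : ℕ) : Module.End ℂ R2 :=
  ((List.range (Δ - α - β)).map
    (fun t => Mf Xv * Dx + Mf Yv * Dy - ((n - Δ + (t + 1) : ℕ) : ℂ) • 1)).prod *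
    Dx ^ α * Dy ^ β

/-- `Q⁺_{αβ}(u,v) = (q̄_{αβ} v, 0)`. -/
def Qgp (n Δ α β : ℕ) : Module.End ℂ V2 := matOp 0 (qbar n Δ α β) 0 0

/-- The generating set `G` for the triangular rank-2 module. -/
def Gtri (n Δ : ℕ) : Set (Module.End ℂ V2) :=
  {Tg1 n Δ, Tg2 n Δ, Tg3, Tg4, Tg5, Tg6, Tg7 n Δ, Tg8 n Δ, Jgen n Δ} ∪
  {P | ∃ α β : ℕ, α + β ≤ Δ ∧ P = Qgm α β} ∪
  {P | ∃ α β : ℕ, α + β ≤ Δ ∧ P = Qgp n Δ α β} ∪ {1}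

/-- The triangular index set `{(i,j) : i + j ≤ a}`. -/
def tIdx (a : ℕ) : Finset (ℕ × ℕ) :=
  (Finset.range (a + 1) ×ˢ Finset.range (a + 1)).filter (fun ij => ij.1 + ij.2 ≤ a)


/-! ### Basic Weyl algebra relations -/

lemma Mf_apply (g p : R2) : Mf g p = g * p := rfl

lemma Dx_apply (p : R2) : Dx p = pderiv 0 p := rfl

lemma Dy_apply (p : R2) : Dy p = pderiv 1 p := rfl

lemma Mf_mul (g h : R2) : Mf g * Mf h = Mf (g * h) := by
  refine LinearMap.ext fun p => ?_; simp [Mf_apply, mul_assoc]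

lemma Mf_one : Mf 1 = 1 := by
  refine LinearMap.ext fun p => ?_; simp [Mf_apply]

lemma Mf_zero : Mf 0 = 0 := by
  refine LinearMap.ext fun p => ?_; simp [Mf_apply]

lemma Mf_add (g h : R2) : Mf (g + h) = Mf g + Mf h := by
  refine LinearMap.ext fun p => ?_; simp [Mf_apply, add_mul]

lemma Mf_sub (g h : R2) : Mf (g - h) = Mf g - Mf h := by
  refine LinearMap.ext fun p => ?_; simp [Mf_apply, sub_mul]

lemma Mf_smul (c : ℂ) (g : R2) : Mf (c • g) = c • Mf g := by
  refine LinearMap.ext fun p => ?_; simp [Mf_apply]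

lemma Dx_Mf (g : R2) : Dx * Mf g = Mf g * Dx + Mf (pderiv 0 g) := by
  refine LinearMap.ext fun p => ?_
  simp only [Module.End.mul_apply, LinearMap.add_apply, Mf_apply, Dx_apply, Derivation.leibniz,
    smul_eq_mul]
  ring

lemma Dy_Mf (g : R2) : Dy * Mf g = Mf g * Dy + Mf (pderiv 1 g) := by
  refine LinearMap.ext fun p => ?_
  simp only [Module.End.mul_apply, LinearMap.add_apply, Mf_apply, Dy_apply, Derivation.leibniz,
    smul_eq_mul]
  ring

lemma Dx_X : (pderiv 0 Xv : R2) = 1 := by simp [Xv]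
lemma Dx_Y : (pderiv 0 Yv : R2) = 0 := by simp [Yv, pderiv_X]
lemma Dy_X : (pderiv 1 Xv : R2) = 0 := by simp [Xv, pderiv_X]
lemma Dy_Y : (pderiv 1 Yv : R2) = 1 := by simp [Yv]

lemma Dx_comm_Dy : Dx * Dy = Dy * Dx := by
  have h : ∀ m : Fin 2 →₀ ℕ, Dx (Dy (monomial m 1)) = Dy (Dx (monomial m 1)) := by
    intro m
    simp only [Dx_apply, Dy_apply, pderiv_monomial]
    rw [show m - Finsupp.single 1 1 - Finsupp.single 0 1 = m - Finsupp.single 0 1 -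
      Finsupp.single 1 1 from by ext i; fin_cases i <;> simp]
    simp [mul_comm]
  apply (basisMonomials (Fin 2) ℂ).ext
  intro m
  simpa using h m

lemma comm_pow (i j : ℕ) : Dx ^ i * Dy ^ j = Dy ^ j * Dx ^ i :=
  (Commute.pow_pow (show Commute Dx Dy from Dx_comm_Dy) i j).eq

/-- monomial operators-ish: `M_g Dx^i Dy^j`. -/
def mop (g : R2) (i j : ℕ) : Module.End ℂ R2 := Mf g * Dx ^ i * Dy ^ j

lemma mop_Dx (g : R2) (i j : ℕ) : mop g i j * Dx = mop g (i + 1) j := by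
  have : Dy ^ j * Dx = Dx * Dy ^ j := by simpa using (comm_pow 1 j).symm
  rw [mop, mop, mul_assoc, this, ← mul_assoc, mul_assoc (Mf g), ← pow_succ]

lemma mop_Dy (g : R2) (i j : ℕ) : mop g i j * Dy = mop g i (j + 1) := by
  rw [mop, mop, mul_assoc, ← pow_succ]

lemma Mf_mop (h g : R2) (i j : ℕ) : Mf h * mop g i j = mop (h * g) i j := by
  simp only [mop, ← mul_assoc, Mf_mul]

lemma mop_add (g h : R2) (i j : ℕ) : mop (g + h) i j = mop g i j + mop h i j := by
  simp [mop, Mf_add, add_mul]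

lemma mop_smul (c : ℂ) (g : R2) (i j : ℕ) : mop (c • g) i j = c • mop g i j := by
  simp [mop, Mf_smul]

lemma mop_zero (i j : ℕ) : mop 0 i j = 0 := by
  simp [mop, Mf_zero]

lemma Dx_mop (g : R2) (i j : ℕ) : Dx * mop g i j = mop g (i + 1) j + mop (pderiv 0 g) i j := by
  simp only [mop]
  rw [← mul_assoc, ← mul_assoc, Dx_Mf, pow_succ']
  simp only [add_mul, mul_assoc]

lemma Dy_mop (g : R2) (i j : ℕ) : Dy * mop g i j = mop g i (j + 1) + mop (pderiv 1 g) i j := by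
  simp only [mop]
  have : Dy * Dx ^ i = Dx ^ i * Dy := by simpa using (comm_pow i 1).symm
  rw [← mul_assoc, ← mul_assoc, Dy_Mf, pow_succ']
  simp only [add_mul, mul_assoc]
  rw [← mul_assoc Dy, this]
  simp only [mul_assoc]

lemma Dx_pow_X (i : ℕ) : Dx ^ i * Mf Xv = Mf Xv * Dx ^ i + (i : ℂ) • Dx ^ (i - 1) := by
  induction i with
  | zero => simp
  | succ i ih =>
    rw [pow_succ', mul_assoc, ih, mul_add, ← mul_assoc, Dx_Mf, Dx_X, Mf_one]
    rcases i with _ | i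
    · simp
    · simp only [Nat.add_sub_cancel, add_mul, mul_assoc, one_mul, mul_smul_comm, ← pow_succ']
      push_cast
      module

lemma Dy_pow_Y (i : ℕ) : Dy ^ i * Mf Yv = Mf Yv * Dy ^ i + (i : ℂ) • Dy ^ (i - 1) := by
  induction i with
  | zero => simp
  | succ i ih =>
    rw [pow_succ', mul_assoc, ih, mul_add, ← mul_assoc, Dy_Mf, Dy_Y, Mf_one]
    rcases i with _ | i
    · simp
    · simp only [Nat.add_sub_cancel, add_mul, mul_assoc, one_mul, mul_smul_comm, ← pow_succ']
      push_cast
      module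

lemma Dx_pow_Y (i : ℕ) : Dx ^ i * Mf Yv = Mf Yv * Dx ^ i :=
  (Commute.pow_left (show Commute Dx (Mf Yv) from by
    show _ = _
    rw [Dx_Mf, Dx_Y, Mf_zero, add_zero]) i).eq

lemma Dy_pow_X (i : ℕ) : Dy ^ i * Mf Xv = Mf Xv * Dy ^ i :=
  (Commute.pow_left (show Commute Dy (Mf Xv) from by
    show _ = _
    rw [Dy_Mf, Dy_X, Mf_zero, add_zero]) i).eq

lemma mop_X (g : R2) (i j : ℕ) :
    mop g i j * Mf Xv = mop (Xv * g) i j + (i : ℂ) • mop g (i - 1) j := by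
  simp only [mop]
  rw [mul_assoc, Dy_pow_X, ← mul_assoc, mul_assoc (Mf g), Dx_pow_X, mul_add, ← mul_assoc, Mf_mul,
    mul_comm g, add_mul, mul_smul_comm, smul_mul_assoc]

lemma mop_Y (g : R2) (i j : ℕ) :
    mop g i j * Mf Yv = mop (Yv * g) i j + (j : ℂ) • mop g i (j - 1) := by
  simp only [mop]
  rw [mul_assoc, Dy_pow_Y, mul_add, ← mul_assoc, mul_assoc (Mf g), Dx_pow_Y, ← mul_assoc, Mf_mul,
    mul_comm g, mul_smul_comm]

/-- Euler operator. -/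
def Eu : Module.End ℂ R2 := Mf Xv * Dx + Mf Yv * Dy

lemma mop_Eu (g : R2) (i j : ℕ) :
    mop g i j * Eu = mop (Xv * g) (i + 1) j + mop (Yv * g) i (j + 1)
      + ((i : ℂ) + j) • mop g i j := by
  rw [Eu, mul_add, ← mul_assoc, ← mul_assoc, mop_X, mop_Y, add_mul, add_mul, mop_Dx, mop_Dy,
    smul_mul_assoc, smul_mul_assoc, mop_Dx, mop_Dy]
  rcases i with _ | i <;> rcases j with _ | j <;> simp <;> module

lemma Eu_Dx : Eu * Dx = Dx * Eu - Dx := by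
  rw [Eu, mul_add, ← mul_assoc, ← mul_assoc, Dx_Mf, Dx_Mf, Dx_X, Dx_Y, Mf_one, Mf_zero]
  simp only [add_mul, mul_assoc, Dx_comm_Dy]
  simp; abel

lemma Eu_Dy : Eu * Dy = Dy * Eu - Dy := by
  rw [Eu, mul_add, ← mul_assoc, ← mul_assoc, Dy_Mf, Dy_Mf, Dy_X, Dy_Y, Mf_one, Mf_zero]
  simp only [add_mul, mul_assoc, Dx_comm_Dy]
  simp; abel

/-! ### Order filtration -/

/-- Operators of order `< K`. -/
def OLT (K : ℕ) : Submodule ℂ (Module.End ℂ R2) :=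
  Submodule.span ℂ {A | ∃ (g : R2) (i j : ℕ), i + j < K ∧ A = mop g i j}

lemma mop_mem {g : R2} {i j K : ℕ} (h : i + j < K) : mop g i j ∈ OLT K :=
  Submodule.subset_span ⟨g, i, j, h, rfl⟩

lemma OLT_mono {K L : ℕ} (h : K ≤ L) : OLT K ≤ OLT L := by
  apply Submodule.span_mono
  rintro A ⟨g, i, j, hij, rfl⟩
  exact ⟨g, i, j, by omega, rfl⟩

lemma OLT_zero {A : Module.End ℂ R2} (h : A ∈ OLT 0) : A = 0 := by
  have : {A | ∃ (g : R2) (i j : ℕ), i + j < 0 ∧ A = mop g i j} = ∅ := by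
    ext; simp
  rw [OLT, this] at h
  simpa using h

/-- Induction helper: a linear map sends a span into a submodule. -/
lemma OLT_map (L : Module.End ℂ R2 →ₗ[ℂ] Module.End ℂ R2) (K : ℕ)
    (N : Submodule ℂ (Module.End ℂ R2))
    (h : ∀ g i j, i + j < K → L (mop g i j) ∈ N) {A : Module.End ℂ R2} (hA : A ∈ OLT K) :
    L A ∈ N := by
  have : OLT K ≤ N.comap L := by
    apply Submodule.span_le.2
    rintro A ⟨g, i, j, hij, rfl⟩
    exact h g i j hij
  exact this hA

lemma OLT_mul_Dx {K : ℕ} {A : Module.End ℂ R2} (hA : A ∈ OLT K) : A * Dx ∈ OLT (K + 1) :=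
  OLT_map (LinearMap.mulRight ℂ Dx) K _ (fun g i j h => by
    simp only [LinearMap.mulRight_apply, mop_Dx]; exact mop_mem (by omega)) hA

lemma Mf_mul_OLT {K : ℕ} (h : R2) {A : Module.End ℂ R2} (hA : A ∈ OLT K) : Mf h * A ∈ OLT K :=
  OLT_map (LinearMap.mulLeft ℂ (Mf h)) K _ (fun g i j hh => by
    simp only [LinearMap.mulLeft_apply, Mf_mop]; exact mop_mem hh) hA

lemma Dx_mul_OLT {K : ℕ} {A : Module.End ℂ R2} (hA : A ∈ OLT K) : Dx * A ∈ OLT (K + 1) :=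
  OLT_map (LinearMap.mulLeft ℂ Dx) K _ (fun g i j hh => by
    simp only [LinearMap.mulLeft_apply, Dx_mop]
    exact add_mem (mop_mem (by omega)) (mop_mem (by omega))) hA

lemma Dy_mul_OLT {K : ℕ} {A : Module.End ℂ R2} (hA : A ∈ OLT K) : Dy * A ∈ OLT (K + 1) :=
  OLT_map (LinearMap.mulLeft ℂ Dy) K _ (fun g i j hh => by
    simp only [LinearMap.mulLeft_apply, Dy_mop]
    exact add_mem (mop_mem (by omega)) (mop_mem (by omega))) hA

lemma Dx_pow_mul_OLT {K : ℕ} {A : Module.End ℂ R2} (hA : A ∈ OLT K) (i : ℕ) :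
    Dx ^ i * A ∈ OLT (K + i) := by
  induction i with
  | zero => simpa using hA
  | succ i ih => rw [pow_succ', mul_assoc, ← add_assoc]; exact Dx_mul_OLT ih

lemma Dy_pow_mul_OLT {K : ℕ} {A : Module.End ℂ R2} (hA : A ∈ OLT K) (i : ℕ) :
    Dy ^ i * A ∈ OLT (K + i) := by
  induction i with
  | zero => simpa using hA
  | succ i ih => rw [pow_succ', mul_assoc, ← add_assoc]; exact Dy_mul_OLT ih

lemma OLT_mul {k l : ℕ} {A B : Module.End ℂ R2} (hA : A ∈ OLT (k + 1)) (hB : B ∈ OLT (l + 1)) :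
    A * B ∈ OLT (k + l + 1) :=
  OLT_map (LinearMap.mulRight ℂ B) (k + 1) _ (fun g i j h => by
    simp only [LinearMap.mulRight_apply, mop, mul_assoc]
    exact Mf_mul_OLT _ (OLT_mono (by omega) (Dx_pow_mul_OLT (Dy_pow_mul_OLT hB j) i))) hA

lemma mem_ordIdx (k : ℕ) (p : ℕ × ℕ) : p ∈ ordIdx k ↔ p.1 + p.2 ≤ k := by
  simp [ordIdx]; omega

lemma mem_tIdx (k : ℕ) (p : ℕ × ℕ) : p ∈ tIdx k ↔ p.1 + p.2 ≤ k := by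
  simp [tIdx]; omega

lemma diffOp_mem (F : Finset (ℕ × ℕ)) (f : ℕ × ℕ → R2) (K : ℕ)
    (h : ∀ p ∈ F, f p ≠ 0 → p.1 + p.2 < K) : diffOp F f ∈ OLT K := by
  apply Submodule.sum_mem
  intro p hp
  by_cases h0 : f p = 0
  · rw [h0, Mf_zero]; simp
  · exact mop_mem (h p hp h0)

lemma isDiffOpLE_iff (A : Module.End ℂ R2) (k : ℕ) : IsDiffOpLE A k ↔ A ∈ OLT (k + 1) := by
  constructor
  · rintro ⟨f, rfl⟩
    apply diffOp_mem
    intro p hp _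
    rw [mem_ordIdx] at hp; omega
  · intro hA
    induction hA using Submodule.span_induction with
    | mem A h =>
      obtain ⟨g, i, j, hij, rfl⟩ := h
      refine ⟨fun p => if p = (i, j) then g else 0, ?_⟩
      rw [diffOp, Finset.sum_eq_single (i, j)]
      · simp [mop]
      · intro b _ hb; simp [hb, Mf_zero]
      · intro h; exact absurd ((mem_ordIdx _ _).2 (by simp; omega)) h
    | zero => exact ⟨0, by simp [diffOp, Mf_zero]⟩
    | add A B _ _ hA hB =>
      obtain ⟨f, rfl⟩ := hA
      obtain ⟨g, rfl⟩ := hB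
      exact ⟨f + g, by simp [diffOp, Mf_add, add_mul, Finset.sum_add_distrib]⟩
    | smul c A _ hA =>
      obtain ⟨f, rfl⟩ := hA
      exact ⟨c • f, by simp [diffOp, Mf_smul, Finset.smul_sum]⟩

/-! ### Division by `E - a` -/

/-- `Φ(A) = y A x - x A y`. -/
def Phi : Module.End ℂ R2 →ₗ[ℂ] Module.End ℂ R2 :=
  LinearMap.mulLeft ℂ (Mf Yv) ∘ₗ LinearMap.mulRight ℂ (Mf Xv) -
    LinearMap.mulLeft ℂ (Mf Xv) ∘ₗ LinearMap.mulRight ℂ (Mf Yv)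

lemma Phi_apply (A : Module.End ℂ R2) :
    Phi A = Mf Yv * (A * Mf Xv) - Mf Xv * (A * Mf Yv) := rfl

lemma Phi_mop (g : R2) (i j : ℕ) :
    Phi (mop g i j) = (i : ℂ) • mop (Yv * g) (i - 1) j - (j : ℂ) • mop (Xv * g) i (j - 1) := by
  rw [Phi_apply, mop_X, mop_Y, mul_add, mul_add, mul_smul_comm, mul_smul_comm, Mf_mop, Mf_mop,
    Mf_mop, Mf_mop, mul_left_comm]
  abel

lemma Phi_OLT {K : ℕ} {A : Module.End ℂ R2} (hA : A ∈ OLT (K + 1)) : Phi A ∈ OLT K := by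
  refine OLT_map Phi (K + 1) _ (fun g i j h => ?_) hA
  rw [Phi_mop]
  apply sub_mem
  · rcases i with _ | i
    · simp
    · exact Submodule.smul_mem _ _ (mop_mem (by omega))
  · rcases j with _ | j
    · simp
    · exact Submodule.smul_mem _ _ (mop_mem (by omega))

lemma Phi_iter_OLT {K : ℕ} {A : Module.End ℂ R2} (hA : A ∈ OLT K) : (Phi ^ K) A = 0 := by
  induction K generalizing A with
  | zero => simpa using OLT_zero hA
  | succ K ih => rw [pow_succ, Module.End.mul_apply]; exact ih (Phi_OLT hA)

lemma Phi_iter_mop (K : ℕ) : ∀ (g : R2) (i j : ℕ), i + j = K →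
    (Phi ^ K) (mop g i j) = (K.factorial : ℂ) • Mf (g * Yv ^ i * (-Xv) ^ j) := by
  induction K with
  | zero =>
    intro g i j h
    obtain ⟨rfl, rfl⟩ : i = 0 ∧ j = 0 := by omega
    simp [mop]
  | succ K ih =>
    intro g i j h
    have h1 : (i : ℂ) • (Phi ^ K) (mop (Yv * g) (i - 1) j) =
        ((i : ℂ) * K.factorial) • Mf (g * Yv ^ i * (-Xv) ^ j) := by
      rcases i with _ | i
      · simp
      · rw [ih _ _ _ (by omega), smul_smul, Nat.add_sub_cancel]
        congr 2; ring
    have h2 : (j : ℂ) • (Phi ^ K) (mop (Xv * g) i (j - 1)) =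
        -(((j : ℂ) * K.factorial) • Mf (g * Yv ^ i * (-Xv) ^ j)) := by
      rcases j with _ | j
      · simp
      · have hh : Mf (Xv * g * Yv ^ i * (-Xv) ^ j) = -Mf (g * Yv ^ i * (-Xv) ^ (j + 1)) := by
          refine LinearMap.ext fun p => ?_
          rw [LinearMap.neg_apply, Mf_apply, Mf_apply]
          ring
        rw [ih _ _ _ (by omega), smul_smul, Nat.add_sub_cancel, hh]
        exact smul_neg _ _
    rw [pow_succ, Module.End.mul_apply, Phi_mop, map_sub, map_smul, map_smul, h1, h2, sub_neg_eq_add, ← add_smul,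
      Nat.factorial_succ, ← h]
    congr 1
    push_cast; ring

/-- `A` kills all monomials of degree `w`. -/
def Kills (A : Module.End ℂ R2) (w : ℕ) : Prop := ∀ i j : ℕ, i + j = w → A (Xv ^ i * Yv ^ j) = 0

lemma Phi_kills {A : Module.End ℂ R2} {w : ℕ} (h : Kills A (w + 1)) : Kills (Phi A) w := by
  intro i j hij
  simp only [Phi_apply, LinearMap.sub_apply, Module.End.mul_apply, Mf_apply]
  have h1 := h (i + 1) j (by omega)
  have h2 := h i (j + 1) (by omega)
  rw [show Xv * (Xv ^ i * Yv ^ j) = Xv ^ (i + 1) * Yv ^ j by ring,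
    show Yv * (Xv ^ i * Yv ^ j) = Xv ^ i * Yv ^ (j + 1) by ring, h1, h2]
  simp

lemma Phi_iter_kills (K : ℕ) : ∀ {A : Module.End ℂ R2} {w : ℕ}, Kills A (w + K) →
    Kills ((Phi ^ K) A) w := by
  induction K with
  | zero => intro A w h; simpa using h
  | succ K ih =>
    intro A w h
    rw [pow_succ, Module.End.mul_apply]
    exact ih (Phi_kills h)

lemma symbol_zero {K a : ℕ} (hK : K ≤ a) (f : ℕ × ℕ → R2) {A : Module.End ℂ R2}
    (hA : A - ∑ p ∈ Finset.HasAntidiagonal.antidiagonal K, mop (f p) p.1 p.2 ∈ OLT K) (hk : Kills A a) :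
    ∑ p ∈ Finset.HasAntidiagonal.antidiagonal K, f p * Yv ^ p.1 * (-Xv) ^ p.2 = 0 := by
  obtain ⟨w, rfl⟩ : ∃ w, a = w + K := ⟨a - K, by omega⟩
  have h1 := Phi_iter_OLT hA
  have h2 := Phi_iter_kills K hk w 0 rfl
  rw [map_sub, map_sum, sub_eq_zero, Finset.sum_congr rfl (fun p hp => Phi_iter_mop K (f p) p.1 p.2
    (by simpa using hp))] at h1
  rw [h1] at h2
  simp only [LinearMap.sum_apply, LinearMap.smul_apply, Mf_apply] at h2
  rw [← Finset.smul_sum, ← Finset.sum_mul] at h2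
  have hx : (Xv ^ w * Yv ^ 0 : R2) ≠ 0 := by simp [Xv]
  have h3 := (smul_eq_zero.1 h2).resolve_left (by exact_mod_cast K.factorial_ne_zero)
  exact (mul_eq_zero.1 h3).resolve_right hx

lemma Y_dvd {g : R2} {K : ℕ} (h : Yv ∣ g * (-Xv) ^ K) : Yv ∣ g := by
  have hp : Prime Yv := X_prime
  rcases hp.dvd_or_dvd h with h | h
  · exact h
  · have h1 := hp.dvd_of_dvd_pow h
    rw [dvd_neg, Yv, Xv, X_dvd_X] at h1
    simp at h1

/-- `E - a`. -/
def Ea (a : ℂ) : Module.End ℂ R2 := Eu - a • 1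

lemma mop_Ea (a : ℂ) (g : R2) (i j : ℕ) :
    mop g i j * Ea a = mop (Xv * g) (i + 1) j + mop (Yv * g) i (j + 1)
      + ((i : ℂ) + j - a) • mop g i j := by
  rw [Ea, mul_sub, mop_Eu]
  simp only [mul_smul_comm, mul_one]
  module

lemma Ea_Dx (a : ℂ) : Ea a * Dx = Dx * Ea a - Dx := by
  rw [Ea, sub_mul, Eu_Dx, mul_sub]
  simp only [mul_smul_comm, mul_one, smul_mul_assoc, one_mul]
  abel

lemma division (a : ℂ) (K : ℕ) : ∀ (f : ℕ × ℕ → R2),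
    ∑ p ∈ Finset.HasAntidiagonal.antidiagonal K, f p * Yv ^ p.1 * (-Xv) ^ p.2 = 0 →
    ∃ τ ∈ OLT K, ∑ p ∈ Finset.HasAntidiagonal.antidiagonal K, mop (f p) p.1 p.2 - τ * Ea a ∈ OLT K := by
  induction K with
  | zero =>
    intro f h
    refine ⟨0, zero_mem _, ?_⟩
    simp at h
    simp [h, mop_zero]
  | succ K ih =>
    intro f h
    have h0 := h
    rw [Finset.Nat.sum_antidiagonal_succ] at h
    have hs : ∑ p ∈ Finset.HasAntidiagonal.antidiagonal K, f (p.1 + 1, p.2) * Yv ^ (p.1 + 1) * (-Xv) ^ p.2 =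
        Yv * ∑ p ∈ Finset.HasAntidiagonal.antidiagonal K, f (p.1 + 1, p.2) * Yv ^ p.1 * (-Xv) ^ p.2 := by
      rw [Finset.mul_sum]
      exact Finset.sum_congr rfl fun p _ => by ring
    rw [hs] at h
    obtain ⟨g, hg⟩ : Yv ∣ f (0, K + 1) := by
      apply Y_dvd (K := K + 1)
      refine ⟨-∑ p ∈ Finset.HasAntidiagonal.antidiagonal K, f (p.1 + 1, p.2) * Yv ^ p.1 * (-Xv) ^ p.2, ?_⟩
      rw [mul_neg]
      simp only [pow_zero, mul_one] at h
      exact eq_neg_of_add_eq_zero_left h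
    have hsingle : ∀ {N : Type} [AddCommMonoid N] (φ : ℕ × ℕ → N),
        ∑ p ∈ Finset.HasAntidiagonal.antidiagonal K, (if p = (0, K) then φ p else 0) = φ (0, K) := by
      intro N _ φ
      rw [Finset.sum_ite_eq' (Finset.HasAntidiagonal.antidiagonal K) (0, K) φ]
      simp
    obtain ⟨τ, hτ, hτ'⟩ := ih (fun p => f (p.1 + 1, p.2) - if p = (0, K) then Xv * g else 0) (by
      have hY : (Yv : R2) ≠ 0 := by simp [Yv]
      apply mul_left_cancel₀ hY
      rw [mul_zero]
      refine Eq.trans ?_ h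
      have : ∀ p : ℕ × ℕ, (f (p.1 + 1, p.2) - if p = (0, K) then Xv * g else 0) * Yv ^ p.1
          * (-Xv) ^ p.2 = f (p.1 + 1, p.2) * Yv ^ p.1 * (-Xv) ^ p.2 -
          if p = (0, K) then Xv * g * Yv ^ p.1 * (-Xv) ^ p.2 else 0 := by
        intro p; split_ifs <;> ring
      simp only [this, Finset.sum_sub_distrib]
      rw [hsingle (fun p => Xv * g * Yv ^ p.1 * (-Xv) ^ p.2), hg]
      simp only [pow_zero]
      ring)
    refine ⟨mop g 0 K + τ * Dx, add_mem (mop_mem (by omega)) (OLT_mul_Dx hτ), ?_⟩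
    have hm : ∀ p : ℕ × ℕ, mop (f (p.1 + 1, p.2) - if p = (0, K) then Xv * g else 0) p.1 p.2 =
        mop (f (p.1 + 1, p.2)) p.1 p.2 - if p = (0, K) then mop (Xv * g) p.1 p.2 else 0 := by
      intro p; split_ifs <;> simp [mop, Mf_sub, sub_mul]
    simp only [hm, Finset.sum_sub_distrib] at hτ'
    rw [hsingle (fun p => mop (Xv * g) p.1 p.2)] at hτ'
    have h3 := OLT_mul_Dx hτ'
    rw [sub_mul, sub_mul, Finset.sum_mul, mop_Dx] at h3
    simp only [mop_Dx] at h3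
    rw [Finset.Nat.sum_antidiagonal_succ, hg, add_mul, mop_Ea]
    have h4 : τ * Ea a * Dx = τ * Dx * Ea a - τ * Dx := by
      rw [mul_assoc, Ea_Dx, mul_sub, mul_assoc]
    rw [h4] at h3
    have h5 := sub_mem (sub_mem h3 (OLT_mul_Dx hτ))
      (Submodule.smul_mem _ (((0 : ℕ) : ℂ) + K - a) (mop_mem (g := g) (i := 0) (j := K) (K := K + 1)
        (by omega)))
    convert h5 using 1
    simp only [zero_add]
    abel

lemma exists_symbol {K : ℕ} {A : Module.End ℂ R2} (hA : A ∈ OLT (K + 1)) :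
    ∃ f : ℕ × ℕ → R2, A - ∑ p ∈ Finset.HasAntidiagonal.antidiagonal K, mop (f p) p.1 p.2 ∈ OLT K := by
  obtain ⟨f, rfl⟩ := (isDiffOpLE_iff A K).2 hA
  refine ⟨f, ?_⟩
  have hsub : Finset.HasAntidiagonal.antidiagonal K ⊆ ordIdx K := by
    intro p hp
    rw [Finset.HasAntidiagonal.mem_antidiagonal] at hp
    exact (mem_ordIdx _ _).2 hp.le
  have : diffOp (ordIdx K) f - ∑ p ∈ Finset.HasAntidiagonal.antidiagonal K, mop (f p) p.1 p.2 =
      diffOp (ordIdx K \ Finset.HasAntidiagonal.antidiagonal K) f := by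
    rw [diffOp, ← Finset.sum_sdiff hsub]
    simp [mop, diffOp]
  rw [this]
  apply diffOp_mem
  intro p hp _
  rw [Finset.mem_sdiff, mem_ordIdx, Finset.HasAntidiagonal.mem_antidiagonal] at hp
  omega

lemma Eu_mon (u v : ℕ) : Eu (Xv ^ u * Yv ^ v) = ((u : ℂ) + v) • (Xv ^ u * Yv ^ v) := by
  simp only [Eu, LinearMap.add_apply, Module.End.mul_apply, Mf_apply, Dx_apply, Dy_apply,
    Derivation.leibniz, Derivation.leibniz_pow, Dx_X, Dx_Y, Dy_X, Dy_Y, smul_eq_mul]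
  rcases u with _ | u <;> rcases v with _ | v <;>
  simp [Algebra.smul_def] <;> ring

lemma Ea_mon (a : ℂ) (u v : ℕ) :
    Ea a (Xv ^ u * Yv ^ v) = ((u : ℂ) + v - a) • (Xv ^ u * Yv ^ v) := by
  simp only [Ea, LinearMap.sub_apply, Eu_mon, LinearMap.smul_apply, Module.End.one_apply]
  module

lemma kills_mul_Ea (B : Module.End ℂ R2) (a : ℕ) : Kills (B * Ea (a : ℂ)) a := by
  intro i j h
  rw [Module.End.mul_apply, Ea_mon, ← h]
  simp

lemma van (a : ℕ) (K : ℕ) : ∀ {A : Module.End ℂ R2}, A ∈ OLT K → K ≤ a + 1 → Kills A a →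
    ∃ B ∈ OLT (K - 1), A = B * Ea (a : ℂ) := by
  induction K with
  | zero =>
    intro A hA _ _
    exact ⟨0, zero_mem _, by rw [OLT_zero hA]; simp⟩
  | succ K ih =>
    intro A hA hK hk
    obtain ⟨f, hf⟩ := exists_symbol hA
    have h0 := symbol_zero (by omega) f hf hk
    obtain ⟨τ, hτ, h1⟩ := division (a : ℂ) K f h0
    have h2 : A - τ * Ea (a : ℂ) ∈ OLT K := by
      have := add_mem hf h1
      simpa using this
    obtain ⟨B, hB, hB'⟩ := ih h2 (by omega) (fun i j hij => by
      rw [LinearMap.sub_apply, hk i j hij, kills_mul_Ea τ a i j hij, sub_zero])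
    refine ⟨B + τ, add_mem (OLT_mono (by omega) hB) hτ, ?_⟩
    rw [add_mul, ← hB']
    abel

/-! ### Graded components of operators -/

lemma mon_eq (m : Fin 2 →₀ ℕ) : (monomial m (1 : ℂ) : R2) = Xv ^ (m 0) * Yv ^ (m 1) := by
  rw [monomial_eq]
  simp [Finsupp.prod_fintype, Xv, Yv]

lemma mon_eq' (u v : ℕ) : (Xv ^ u * Yv ^ v : R2) =
    basisMonomials (Fin 2) ℂ (Finsupp.single 0 u + Finsupp.single 1 v) := by
  rw [coe_basisMonomials]
  refine Eq.trans ?_ (mon_eq _).symm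
  simp

lemma end_ext {A B : Module.End ℂ R2}
    (h : ∀ u v, A (Xv ^ u * Yv ^ v) = B (Xv ^ u * Yv ^ v)) : A = B := by
  apply (basisMonomials (Fin 2) ℂ).ext
  intro m
  have hm : basisMonomials (Fin 2) ℂ m = Xv ^ (m 0) * Yv ^ (m 1) := by
    rw [coe_basisMonomials]; exact mon_eq m
  rw [hm]
  exact h _ _

lemma span_mon (g : R2) : g ∈ Submodule.span ℂ {P : R2 | ∃ s t : ℕ, P = Xv ^ s * Yv ^ t} := by
  have h := (basisMonomials (Fin 2) ℂ).mem_span g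
  refine Submodule.span_mono ?_ h
  rintro _ ⟨m, rfl⟩
  rw [coe_basisMonomials]
  exact ⟨m 0, m 1, mon_eq m⟩

/-- homogeneous component of integer degree. -/
def hcI (z : ℤ) : R2 →ₗ[ℂ] R2 := if 0 ≤ z then homogeneousComponent z.toNat else 0

lemma hcI_mon (z : ℤ) (u v : ℕ) :
    hcI z (Xv ^ u * Yv ^ v) = if z = (u : ℤ) + v then Xv ^ u * Yv ^ v else 0 := by
  have hh : (Xv ^ u * Yv ^ v : R2).IsHomogeneous (u + v) := by
    have := ((isHomogeneous_X ℂ (0 : Fin 2)).pow u).mul ((isHomogeneous_X ℂ (1 : Fin 2)).pow v)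
    simpa [Xv, Yv] using this
  unfold hcI
  by_cases h0 : 0 ≤ z
  · rw [if_pos h0, homogeneousComponent_of_mem hh]
    by_cases h : z = (u : ℤ) + v
    · rw [if_pos h, if_pos (by omega)]
    · rw [if_neg h, if_neg (by omega)]
  · rw [if_neg h0, if_neg (by omega)]
    simp

lemma hcI_Tmod {b : ℕ} {z : ℤ} (hz : (b : ℤ) < z) {p : R2} (hp : p ∈ Tmod b) : hcI z p = 0 := by
  have : Tmod b ≤ LinearMap.ker (hcI z) := by
    apply Submodule.span_le.2
    rintro _ ⟨i, j, hij, rfl⟩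
    simp only [SetLike.mem_coe, LinearMap.mem_ker]
    rw [hcI_mon, if_neg (by omega)]
  exact this hp

/-- degree `d` component of an operator. -/
def piD (d : ℤ) (A : Module.End ℂ R2) : Module.End ℂ R2 :=
  (basisMonomials (Fin 2) ℂ).constr ℂ
    (fun m => hcI ((m 0 : ℤ) + m 1 + d) (A (Xv ^ (m 0) * Yv ^ (m 1))))

lemma piD_mon (d : ℤ) (A : Module.End ℂ R2) (u v : ℕ) :
    piD d A (Xv ^ u * Yv ^ v) = hcI ((u : ℤ) + v + d) (A (Xv ^ u * Yv ^ v)) := by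
  conv_lhs => rw [mon_eq', piD, Module.Basis.constr_basis]
  simp

/-- `piD` as a linear map. -/
def piL (d : ℤ) : Module.End ℂ R2 →ₗ[ℂ] Module.End ℂ R2 where
  toFun := piD d
  map_add' A B := end_ext fun u v => by simp [piD_mon]
  map_smul' c A := end_ext fun u v => by simp [piD_mon]

lemma piL_mon (d : ℤ) (A : Module.End ℂ R2) (u v : ℕ) :
    piL d A (Xv ^ u * Yv ^ v) = hcI ((u : ℤ) + v + d) (A (Xv ^ u * Yv ^ v)) := piD_mon d A u v

lemma Dx_mon (u v : ℕ) : Dx (Xv ^ u * Yv ^ v) = (u : ℂ) • (Xv ^ (u - 1) * Yv ^ v) := by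
  simp only [Dx_apply, Derivation.leibniz, Derivation.leibniz_pow, Dx_X, Dx_Y, smul_eq_mul]
  simp [Algebra.smul_def]; ring

lemma Dy_mon (u v : ℕ) : Dy (Xv ^ u * Yv ^ v) = (v : ℂ) • (Xv ^ u * Yv ^ (v - 1)) := by
  simp only [Dy_apply, Derivation.leibniz, Derivation.leibniz_pow, Dy_X, Dy_Y, smul_eq_mul]
  simp [Algebra.smul_def]; ring

/-- `A` is homogeneous of degree `d` on monomials. -/
def HomD (d : ℤ) (A : Module.End ℂ R2) : Prop :=
  ∀ u v : ℕ, ∃ (c : ℂ) (p q : ℕ), A (Xv ^ u * Yv ^ v) = c • (Xv ^ p * Yv ^ q) ∧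
    (c = 0 ∨ (p : ℤ) + q = u + v + d)

lemma HomD.mul {d e : ℤ} {A B : Module.End ℂ R2} (hA : HomD d A) (hB : HomD e B) :
    HomD (d + e) (A * B) := by
  intro u v
  obtain ⟨c, p, q, h, h'⟩ := hB u v
  obtain ⟨c2, p2, q2, h2, h2'⟩ := hA p q
  refine ⟨c * c2, p2, q2, ?_, ?_⟩
  · rw [Module.End.mul_apply, h, map_smul, h2, smul_smul]
  · rcases h' with h' | h'
    · left; simp [h']
    · rcases h2' with h2' | h2'
      · left; simp [h2']
      · right; omega

lemma HomD_Dx : HomD (-1) Dx := fun u v => ⟨u, u - 1, v, Dx_mon u v, by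
  rcases u with _ | u
  · left; simp
  · right; simp only [Nat.add_sub_cancel]; push_cast; ring⟩

lemma HomD_Dy : HomD (-1) Dy := fun u v => ⟨v, u, v - 1, Dy_mon u v, by
  rcases v with _ | v
  · left; simp
  · right; simp only [Nat.add_sub_cancel]; push_cast; ring⟩

lemma HomD_one : HomD 0 (1 : Module.End ℂ R2) := fun u v => ⟨1, u, v, by simp, by simp⟩

lemma HomD.pow {d : ℤ} {A : Module.End ℂ R2} (hA : HomD d A) (i : ℕ) : HomD (i * d) (A ^ i) := by
  induction i with
  | zero => simpa using HomD_one
  | succ i ih =>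
    rw [pow_succ]
    convert ih.mul hA using 1
    push_cast; ring

lemma HomD_mop (s t i j : ℕ) : HomD ((s : ℤ) + t - i - j) (mop (Xv ^ s * Yv ^ t) i j) := by
  have h1 : HomD ((s : ℤ) + t) (Mf (Xv ^ s * Yv ^ t)) := fun u v =>
    ⟨1, s + u, t + v, by rw [Mf_apply, one_smul]; ring, by right; push_cast; ring⟩
  show HomD _ (Mf (Xv ^ s * Yv ^ t) * Dx ^ i * Dy ^ j)
  convert (h1.mul (HomD_Dx.pow i)).mul (HomD_Dy.pow j) using 1
  · ring

lemma piL_HomD {d e : ℤ} {A : Module.End ℂ R2} (hA : HomD e A) :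
    piL d A = if d = e then A else 0 := by
  apply end_ext
  intro u v
  obtain ⟨c, p, q, h, h'⟩ := hA u v
  rw [piL_mon, h, map_smul, hcI_mon]
  rcases h' with h' | h'
  · split_ifs <;> simp [h', h]
  · by_cases hd : d = e
    · rw [if_pos hd, if_pos (by omega), h]
    · rw [if_neg hd, if_neg (by omega)]; simp

lemma OLT_le_span (K : ℕ) : OLT K ≤ Submodule.span ℂ {A | ∃ s t i j : ℕ, i + j < K ∧
    A = mop (Xv ^ s * Yv ^ t) i j} := by
  apply Submodule.span_le.2
  rintro _ ⟨g, i, j, hij, rfl⟩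
  have hg := span_mon g
  induction hg using Submodule.span_induction with
  | mem P h =>
    obtain ⟨s, t, rfl⟩ := h
    exact Submodule.subset_span ⟨s, t, i, j, hij, rfl⟩
  | zero => rw [mop_zero]; exact zero_mem _
  | add p q _ _ hp hq => rw [mop_add]; exact add_mem hp hq
  | smul c p _ hp => rw [mop_smul]; exact Submodule.smul_mem _ _ hp

lemma piL_mem {K : ℕ} (d : ℤ) {A : Module.End ℂ R2} (hA : A ∈ OLT K) :
    piL d A ∈ Submodule.span ℂ {A | ∃ s t i j : ℕ, i + j < K ∧ (s : ℤ) + t = i + j + d ∧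
      A = mop (Xv ^ s * Yv ^ t) i j} := by
  have : OLT K ≤ (Submodule.span ℂ {A | ∃ s t i j : ℕ, i + j < K ∧ (s : ℤ) + t = i + j + d ∧
      A = mop (Xv ^ s * Yv ^ t) i j}).comap (piL d) := by
    refine (OLT_le_span K).trans (Submodule.span_le.2 ?_)
    rintro _ ⟨s, t, i, j, hij, rfl⟩
    simp only [SetLike.mem_coe, Submodule.mem_comap]
    rw [piL_HomD (HomD_mop s t i j)]
    split_ifs with h
    · exact Submodule.subset_span ⟨s, t, i, j, hij, by omega, rfl⟩
    · exact zero_mem _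
  exact this hA

lemma piL_mem_OLT {K : ℕ} (d : ℤ) {A : Module.End ℂ R2} (hA : A ∈ OLT K) : piL d A ∈ OLT K := by
  refine Submodule.span_mono ?_ (piL_mem d hA)
  rintro _ ⟨s, t, i, j, hij, _, rfl⟩
  exact ⟨_, i, j, hij, rfl⟩

lemma piL_piL (d : ℤ) {K : ℕ} {A : Module.End ℂ R2} (hA : A ∈ OLT K) :
    piL d (piL d A) = piL d A := by
  have : Submodule.span ℂ {A | ∃ s t i j : ℕ, i + j < K ∧ (s : ℤ) + t = i + j + d ∧
      A = mop (Xv ^ s * Yv ^ t) i j} ≤ LinearMap.eqLocus (piL d) LinearMap.id := by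
    apply Submodule.span_le.2
    rintro _ ⟨s, t, i, j, hij, hd, rfl⟩
    simp only [SetLike.mem_coe, LinearMap.mem_eqLocus, LinearMap.id_apply]
    rw [piL_HomD (HomD_mop s t i j), if_pos (by omega)]
  exact this (piL_mem d hA)

lemma sum_piL {K : ℕ} {A : Module.End ℂ R2} (hA : A ∈ OLT K) :
    ∃ D0 : Finset ℤ, ∀ D, D0 ⊆ D → ∑ d ∈ D, piL d A = A := by
  replace hA := OLT_le_span K hA
  induction hA using Submodule.span_induction with
  | mem P h =>
    obtain ⟨s, t, i, j, _, rfl⟩ := h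
    refine ⟨{(s : ℤ) + t - i - j}, fun D hD => ?_⟩
    simp only [piL_HomD (HomD_mop s t i j)]
    rw [Finset.sum_ite_eq', if_pos (hD (Finset.mem_singleton_self _))]
  | zero => exact ⟨∅, by simp⟩
  | add p q _ _ hp hq =>
    obtain ⟨D1, h1⟩ := hp
    obtain ⟨D2, h2⟩ := hq
    refine ⟨D1 ∪ D2, fun D hD => ?_⟩
    simp only [map_add, Finset.sum_add_distrib]
    rw [h1 D (Finset.union_subset_left hD), h2 D (Finset.union_subset_right hD)]
  | smul c p _ hp =>
    obtain ⟨D1, h1⟩ := hp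
    refine ⟨D1, fun D hD => ?_⟩
    simp only [map_smul, ← Finset.smul_sum]
    rw [h1 D hD]

/-- `F(r,a) = ∏_{l<r} (E - a + l)`. -/
def FF (a : ℂ) : ℕ → Module.End ℂ R2
  | 0 => 1
  | r + 1 => Ea (a - r) * FF a r

lemma FF_mon (a : ℂ) (r u v : ℕ) : FF a r (Xv ^ u * Yv ^ v) =
    (∏ l ∈ Finset.range r, ((u : ℂ) + v - (a - l))) • (Xv ^ u * Yv ^ v) := by
  induction r with
  | zero => simp [FF]
  | succ r ih =>
    rw [FF, Module.End.mul_apply, ih, map_smul, Ea_mon, smul_smul, Finset.prod_range_succ]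

lemma piL_FF (d : ℤ) (B : Module.End ℂ R2) (a : ℂ) (r : ℕ) :
    piL d (B * FF a r) = piL d B * FF a r := by
  apply end_ext
  intro u v
  rw [piL_mon, Module.End.mul_apply, Module.End.mul_apply, FF_mon, map_smul, map_smul, map_smul,
    piL_mon]

/-- The basic operators. -/
def elts (a b k : ℕ) : Set (Module.End ℂ R2) :=
  {A | ∃ s t i j r : ℕ, i + j + r ≤ k ∧ s + t + a ≤ i + j + r + b ∧
    A = mop (Xv ^ s * Yv ^ t) i j * FF (a : ℂ) r}

lemma peel (a : ℕ) {K : ℕ} (hK : K ≤ a + 1) {A : Module.End ℂ R2} (hA : A ∈ OLT K) (r : ℕ) :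
    r ≤ a + 1 → (∀ w, w ≤ a → a < w + r → Kills A w) →
    ∃ B ∈ OLT (K - r), A = B * FF (a : ℂ) r := by
  induction r with
  | zero => intro _ _; exact ⟨A, hA, by simp [FF]⟩
  | succ r ih =>
    intro hr hk
    obtain ⟨B, hB, rfl⟩ := ih (by omega) (fun w h1 h2 => hk w h1 (by omega))
    have hkB : Kills B (a - r) := by
      intro i j hij
      have h := hk (a - r) (by omega) (by omega) i j hij
      rw [Module.End.mul_apply, FF_mon, map_smul] at h
      refine (smul_eq_zero.1 h).resolve_left ?_
      refine Finset.prod_ne_zero_iff.2 ?_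
      intro l hl h0
      rw [Finset.mem_range] at hl
      have h1 : ((i + j + l : ℕ) : ℂ) = (a : ℕ) := by
        push_cast; linear_combination h0
      have := Nat.cast_injective h1
      omega
    obtain ⟨B', hB', rfl⟩ := van (a - r) (K - r) hB (by omega) hkB
    refine ⟨B', by rwa [Nat.sub_sub] at hB', ?_⟩
    rw [FF, mul_assoc, Nat.cast_sub (by omega)]

lemma decomp (a b k : ℕ) (hk : k ≤ a) {T : Module.End ℂ R2} (hT : T ∈ OLT (k + 1))
    (hmap : ∀ p ∈ Tmod a, T p ∈ Tmod b) : T ∈ Submodule.span ℂ (elts a b k) := by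
  obtain ⟨D, hD⟩ := sum_piL hT
  rw [← hD D subset_rfl]
  apply Submodule.sum_mem
  intro d _
  have hkill : ∀ w : ℕ, w ≤ a → (b : ℤ) < w + d → Kills (piL d T) w := by
    intro w hw hb i j hij
    rw [piL_mon]
    exact hcI_Tmod (b := b) (by omega) (hmap _ (Submodule.subset_span ⟨i, j, by omega, rfl⟩))
  have hO := piL_mem_OLT d hT
  obtain ⟨r, hr⟩ : ∃ r : ℕ, r = ((a : ℤ) + d - b).toNat := ⟨_, rfl⟩
  by_cases hra : r ≤ a + 1
  · obtain ⟨B, hB, hB'⟩ := peel a (K := k + 1) (by omega) hO r hra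
      (fun w h1 h2 => hkill w h1 (by omega))
    rw [← piL_piL d hT, hB', piL_FF]
    have hle : (a : ℤ) + d - b ≤ r := by omega
    clear hr
    have hm := piL_mem d hB
    have : Submodule.span ℂ {A | ∃ s t i j : ℕ, i + j < k + 1 - r ∧
        (s : ℤ) + t = i + j + d ∧ A = mop (Xv ^ s * Yv ^ t) i j} ≤
        (Submodule.span ℂ (elts a b k)).comap (LinearMap.mulRight ℂ (FF (a : ℂ) r)) := by
      apply Submodule.span_le.2
      rintro _ ⟨s, t, i, j, hij, hd, rfl⟩
      simp only [SetLike.mem_coe, Submodule.mem_comap, LinearMap.mulRight_apply]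
      exact Submodule.subset_span ⟨s, t, i, j, r, by omega, by omega, rfl⟩
    have h2 := this hm
    simpa only [Submodule.mem_comap, LinearMap.mulRight_apply] using h2
  · obtain ⟨B, hB, hB'⟩ := peel a (K := k + 1) (by omega) hO (a + 1) (by omega)
      (fun w h1 h2 => hkill w h1 (by omega))
    rw [show k + 1 - (a + 1) = 0 by omega] at hB
    rw [hB', OLT_zero hB, zero_mul]
    exact zero_mem _

/-! ### Generation of the basic operators -/

lemma Ea_HomD {d : ℤ} {A : Module.End ℂ R2} (hA : HomD d A) (c : ℂ) :
    Ea c * A = A * Ea (c - d) := by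
  apply end_ext
  intro u v
  obtain ⟨κ, p, q, h, h'⟩ := hA u v
  rw [Module.End.mul_apply, Module.End.mul_apply, h, Ea_mon, map_smul, map_smul, h, Ea_mon]
  rcases h' with h' | h'
  · simp [h']
  · have : (p : ℂ) + q = u + v + d := by exact_mod_cast h'
    rw [this, smul_comm]
    congr 1
    ring

lemma FF_HomD {d : ℤ} {A : Module.End ℂ R2} (hA : HomD d A) (c : ℂ) (r : ℕ) :
    FF c r * A = A * FF (c - d) r := by
  induction r with
  | zero => simp [FF]
  | succ r ih =>
    rw [FF, FF, mul_assoc, ih, ← mul_assoc, Ea_HomD hA, mul_assoc]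
    congr 3
    ring

lemma Ea_shift (c e : ℂ) : Ea c = Ea (c + e) + e • 1 := by
  simp only [Ea]; module

lemma pderiv0_mon (s t : ℕ) :
    (pderiv 0 (Xv ^ s * Yv ^ t) : R2) = (s : ℂ) • (Xv ^ (s - 1) * Yv ^ t) := Dx_mon s t

lemma pderiv1_mon (s t : ℕ) :
    (pderiv 1 (Xv ^ s * Yv ^ t) : R2) = (t : ℂ) • (Xv ^ s * Yv ^ (t - 1)) := Dy_mon s t

lemma split_mon (a b m s t : ℕ) (hm : a ≤ m + b) (h : s + t + a ≤ m + 1 + b) :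
    ∃ e f s' t' : ℕ, e + f ≤ 1 ∧ s = e + s' ∧ t = f + t' ∧ s' + t' + a ≤ m + b ∧
      (e + f = 0 ∨ s' + t' + a = m + b) := by
  by_cases h1 : s + t + a ≤ m + b
  · exact ⟨0, 0, s, t, by omega, by omega, by omega, h1, by omega⟩
  · rcases s with _ | s
    · rcases t with _ | t
      · omega
      · exact ⟨0, 1, 0, t, by omega, by omega, by omega, by omega, by omega⟩
    · exact ⟨1, 0, s, t, by omega, by omega, by omega, by omega, by omega⟩

lemma gen_step (a b : ℕ) (P : ℕ → Submodule ℂ (Module.End ℂ R2)) (m0 : ℕ) (hm0 : a ≤ m0 + b)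
    (hmono : ∀ m, P m ≤ P (m + 1))
    (hX : ∀ e f, e + f ≤ 1 → ∀ m A, A ∈ P m → Mf (Xv ^ e * Yv ^ f) * (Dx * A) ∈ P (m + 1))
    (hY : ∀ e f, e + f ≤ 1 → ∀ m A, A ∈ P m → Mf (Xv ^ e * Yv ^ f) * (Dy * A) ∈ P (m + 1))
    (hE : ∀ e f, e + f ≤ 1 → ∀ m A, A ∈ P m → Mf (Xv ^ e * Yv ^ f) * (Ea b * A) ∈ P (m + 1))
    (hbase : ∀ s t i j r, i + j + r = m0 → s + t + a ≤ m0 + b →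
      mop (Xv ^ s * Yv ^ t) i j * FF (a : ℂ) r ∈ P m0) (m : ℕ) (hm : m0 ≤ m) :
    ∀ s t i j r, i + j + r = m → s + t + a ≤ m + b →
      mop (Xv ^ s * Yv ^ t) i j * FF (a : ℂ) r ∈ P m := by
  induction m, hm using Nat.le_induction with
  | base => exact hbase
  | succ m hm ih =>
    intro s t i j r hijr hst
    obtain ⟨e, f, s', t', hef, rfl, rfl, h1, h2⟩ := split_mon a b m s t (by omega) hst
    have hmon : (Xv ^ (e + s') * Yv ^ (f + t') : R2) = Xv ^ e * Yv ^ f * (Xv ^ s' * Yv ^ t') := by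
      ring
    rcases i with _ | i
    · rcases j with _ | j
      · rcases r with _ | r
        · omega
        · have h3 := hE e f hef m _ (ih s' t' 0 0 r (by omega) h1)
          have hH := HomD_mop s' t' 0 0
          rw [← mul_assoc (Ea _), Ea_HomD hH, mul_assoc, ← mul_assoc (Mf _), Mf_mop, ← hmon] at h3
          rw [FF, Ea_shift ((a : ℂ) - r) ((b : ℂ) - s' - t' - a + r), add_mul, mul_add]
          apply add_mem
          · convert h3 using 4
            push_cast; ring
          · rw [smul_mul_assoc, one_mul, mul_smul_comm]
            rcases h2 with h2 | h2
            · apply Submodule.smul_mem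
              exact hmono _ (ih _ _ 0 0 r (by omega) (by omega))
            · have h4 : (s' : ℂ) + t' + a = m + b := by exact_mod_cast h2
              have h5 : r = m := by omega
              rw [h5, show (b : ℂ) - s' - t' - a + m = 0 by linear_combination -h4, zero_smul]
              exact zero_mem _
      · have h3 := hY e f hef m _ (ih s' t' 0 j r (by omega) h1)
        rw [← mul_assoc Dy, ← mul_assoc (Mf _), Dy_mop, mul_add, Mf_mop, Mf_mop, ← hmon, add_mul]
          at h3
        have h4 : mop (Xv ^ e * Yv ^ f * (pderiv 1 (Xv ^ s' * Yv ^ t'))) 0 j * FF (a : ℂ) r ∈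
            P (m + 1) := by
          rw [pderiv1_mon, mul_smul_comm, mop_smul, smul_mul_assoc]
          rcases t' with _ | t'
          · simp
          · apply Submodule.smul_mem
            apply hmono
            have := ih (e + s') (f + t') 0 j r (by omega) (by omega)
            rw [show (Xv ^ (e + s') * Yv ^ (f + t') : R2) =
              Xv ^ e * Yv ^ f * (Xv ^ s' * Yv ^ t') by ring] at this
            simpa using this
        have := sub_mem h3 h4
        simpa using this
    · have h3 := hX e f hef m _ (ih s' t' i j r (by omega) h1)
      rw [← mul_assoc Dx, ← mul_assoc (Mf _), Dx_mop, mul_add, Mf_mop, Mf_mop, ← hmon, add_mul]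
        at h3
      have h4 : mop (Xv ^ e * Yv ^ f * (pderiv 0 (Xv ^ s' * Yv ^ t'))) i j * FF (a : ℂ) r ∈
          P (m + 1) := by
        rw [pderiv0_mon, mul_smul_comm, mop_smul, smul_mul_assoc]
        rcases s' with _ | s'
        · simp
        · apply Submodule.smul_mem
          apply hmono
          have := ih (e + s') (f + t') i j r (by omega) (by omega)
          rw [show (Xv ^ (e + s') * Yv ^ (f + t') : R2) =
            Xv ^ e * Yv ^ f * (Xv ^ s' * Yv ^ t') by ring] at this
          simpa using this
      have := sub_mem h3 h4
      simpa using this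

/-- Left stability under the generators `J^i(b)`. -/
structure LStab (b : ℕ) (P : ℕ → Submodule ℂ (Module.End ℂ R2)) : Prop where
  mono : ∀ m, P m ≤ P (m + 1)
  j1 : ∀ m A, A ∈ P m → J1 b * A ∈ P (m + 1)
  j2 : ∀ m A, A ∈ P m → J2 b * A ∈ P (m + 1)
  j3 : ∀ m A, A ∈ P m → J3 * A ∈ P (m + 1)
  j4 : ∀ m A, A ∈ P m → J4 * A ∈ P (m + 1)
  j5 : ∀ m A, A ∈ P m → J5 * A ∈ P (m + 1)
  j6 : ∀ m A, A ∈ P m → J6 * A ∈ P (m + 1)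
  j7 : ∀ m A, A ∈ P m → J7 b * A ∈ P (m + 1)
  j8 : ∀ m A, A ∈ P m → J8 b * A ∈ P (m + 1)

lemma ef_cases {e f : ℕ} (h : e + f ≤ 1) :
    (e = 0 ∧ f = 0) ∨ (e = 1 ∧ f = 0) ∨ (e = 0 ∧ f = 1) := by omega

lemma J7_eq (b : ℂ) : Mf Xv * Dx = J7 b + (b / 3) • 1 := by simp [J7]

lemma J8_eq (b : ℂ) : Mf Yv * Dy = J8 b + (b / 3) • 1 := by simp [J8]

lemma Ea_eq (b : ℂ) : Ea b = J7 b + J8 b + (-b / 3) • 1 := by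
  rw [Ea, Eu, J7, J8]; module

lemma J1_eq (b : ℂ) : Mf Xv * Ea b = J1 b := by
  simp only [Ea, Eu, J1, mul_sub, mul_add, ← mul_assoc, Mf_mul, mul_smul_comm, mul_one, sq]

lemma J2_eq (b : ℂ) : Mf Yv * Ea b = J2 b := by
  simp only [Ea, Eu, J2, mul_sub, mul_add, ← mul_assoc, Mf_mul, mul_smul_comm, mul_one, sq,
    mul_comm Yv Xv]

lemma gen_mem (a b : ℕ) (P : ℕ → Submodule ℂ (Module.End ℂ R2)) (m0 : ℕ) (hm0 : a ≤ m0 + b)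
    (hP : LStab b P)
    (hbase : ∀ s t i j r, i + j + r = m0 → s + t + a ≤ m0 + b →
      mop (Xv ^ s * Yv ^ t) i j * FF (a : ℂ) r ∈ P m0) (m : ℕ) (hm : m0 ≤ m) :
    ∀ s t i j r, i + j + r = m → s + t + a ≤ m + b →
      mop (Xv ^ s * Yv ^ t) i j * FF (a : ℂ) r ∈ P m := by
  refine gen_step a b P m0 hm0 hP.mono ?_ ?_ ?_ hbase m hm
  · intro e f h m A hA
    rcases ef_cases h with ⟨rfl, rfl⟩ | ⟨rfl, rfl⟩ | ⟨rfl, rfl⟩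
    · simpa [Mf_one, J4] using hP.j4 m A hA
    · rw [← mul_assoc]
      simp only [pow_zero, pow_one, mul_one]
      rw [J7_eq b, add_mul, smul_mul_assoc, one_mul]
      exact add_mem (hP.j7 m A hA) (Submodule.smul_mem _ _ (hP.mono m hA))
    · rw [← mul_assoc]
      simpa [Mf_one, J3] using hP.j3 m A hA
  · intro e f h m A hA
    rcases ef_cases h with ⟨rfl, rfl⟩ | ⟨rfl, rfl⟩ | ⟨rfl, rfl⟩
    · simpa [Mf_one, J5] using hP.j5 m A hA
    · rw [← mul_assoc]
      simpa [Mf_one, J6] using hP.j6 m A hA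
    · rw [← mul_assoc]
      simp only [pow_zero, pow_one, one_mul]
      rw [J8_eq b, add_mul, smul_mul_assoc, one_mul]
      exact add_mem (hP.j8 m A hA) (Submodule.smul_mem _ _ (hP.mono m hA))
  · intro e f h m A hA
    rcases ef_cases h with ⟨rfl, rfl⟩ | ⟨rfl, rfl⟩ | ⟨rfl, rfl⟩
    · simp only [pow_zero, mul_one, Mf_one, one_mul]
      rw [Ea_eq, add_mul, add_mul, smul_mul_assoc, one_mul]
      exact add_mem (add_mem (hP.j7 m A hA) (hP.j8 m A hA))
        (Submodule.smul_mem _ _ (hP.mono m hA))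
    · rw [← mul_assoc]
      simp only [pow_zero, pow_one, mul_one]
      rw [J1_eq]
      exact hP.j1 m A hA
    · rw [← mul_assoc]
      simp only [pow_zero, pow_one, one_mul]
      rw [J2_eq]
      exact hP.j2 m A hA

/-- Scalar main lemma. -/
lemma scalar_main (a b m0 k : ℕ) (P : ℕ → Submodule ℂ (Module.End ℂ R2)) (hm0 : a ≤ m0 + b)
    (hP : LStab b P) (hmin : m0 = 0 ∨ m0 + b = a)
    (hbase : ∀ s t i j r, i + j + r = m0 → s + t + a ≤ m0 + b →
      mop (Xv ^ s * Yv ^ t) i j * FF (a : ℂ) r ∈ P m0)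
    (f : ℕ × ℕ → R2) (hf : ∀ p : ℕ × ℕ, k < p.1 + p.2 → f p = 0)
    (hmap : ∀ p ∈ Tmod a, diffOp (tIdx a) f p ∈ Tmod b) : diffOp (tIdx a) f ∈ P k := by
  have hT : diffOp (tIdx a) f ∈ OLT (min k a + 1) := by
    apply diffOp_mem
    intro p hp hfp
    rw [mem_tIdx] at hp
    by_contra hc
    exact hfp (hf p (by omega))
  have hmono : Monotone P := monotone_nat_of_le_succ hP.mono
  refine Submodule.span_le.2 ?_ (decomp a b (min k a) (min_le_right _ _) hT hmap)
  rintro _ ⟨s, t, i, j, r, h1, h2, rfl⟩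
  exact hmono (show i + j + r ≤ k by omega)
    (gen_mem a b P m0 hm0 hP hbase (i + j + r) (by omega) s t i j r rfl h2)

lemma list_FF (c : ℂ) (r : ℕ) :
    ((List.range r).map (fun t : ℕ => Ea (c + ((t : ℂ) + 1)))).prod = FF (c + r) r := by
  induction r generalizing c with
  | zero => simp [FF]
  | succ r ih =>
    rw [List.range_succ_eq_map, List.map_cons, List.prod_cons, List.map_map, FF]
    have := ih (c + 1)
    congr 1
    · congr 1; push_cast; ring
    · rw [show c + ((r + 1 : ℕ) : ℂ) = c + 1 + r by push_cast; ring, ← this]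
      congr 2
      funext t
      simp only [Function.comp]
      congr 1; push_cast; ring

lemma qbar_eq (n Δ i j r : ℕ) (hΔ : Δ ≤ n) (h : i + j + r = Δ) :
    qbar n Δ i j = mop 1 i j * FF (n : ℂ) r := by
  have hH := HomD_mop 0 0 i j
  simp only [pow_zero, mul_one] at hH
  have h1 := list_FF ((n - Δ : ℕ) : ℂ) r
  have h2 : qbar n Δ i j = ((List.range r).map
      (fun t : ℕ => Ea (((n - Δ : ℕ) : ℂ) + ((t : ℂ) + 1)))).prod * mop 1 i j := by
    rw [qbar, mop, Mf_one, one_mul, ← mul_assoc, show Δ - i - j = r by omega]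
    congr 4
    funext t
    rw [Ea, Eu]
    push_cast
    rfl
  rw [h2, h1, FF_HomD hH]
  congr 2
  rw [Nat.cast_sub hΔ, ← h]
  push_cast; ring

/-! ### Matrix operators -/

lemma matOp_apply (A B C D : Module.End ℂ R2) (u v : R2) :
    matOp A B C D (u, v) = (A u + B v, C u + D v) := rfl

lemma V2_ext {P Q : Module.End ℂ V2} (h : ∀ u v, P (u, v) = Q (u, v)) : P = Q :=
  LinearMap.ext fun w => h w.1 w.2

lemma matOp_mul (A B C D A' B' C' D' : Module.End ℂ R2) :
    matOp A B C D * matOp A' B' C' D' =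
      matOp (A * A' + B * C') (A * B' + B * D') (C * A' + D * C') (C * B' + D * D') := by
  apply V2_ext
  intro u v
  rw [Module.End.mul_apply, matOp_apply, matOp_apply, matOp_apply]
  simp only [LinearMap.add_apply, Module.End.mul_apply, map_add]
  ext1 <;> simp only <;> abel

lemma matOp_add (A B C D A' B' C' D' : Module.End ℂ R2) :
    matOp A B C D + matOp A' B' C' D' = matOp (A + A') (B + B') (C + C') (D + D') := by
  apply V2_ext
  intro u v
  rw [LinearMap.add_apply, matOp_apply, matOp_apply, matOp_apply]
  simp only [LinearMap.add_apply, Prod.mk_add_mk]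
  ext1 <;> simp only <;> abel

lemma matOp_smul (c : ℂ) (A B C D : Module.End ℂ R2) :
    c • matOp A B C D = matOp (c • A) (c • B) (c • C) (c • D) := by
  apply V2_ext
  intro u v
  rw [LinearMap.smul_apply, matOp_apply, matOp_apply]
  simp only [LinearMap.smul_apply, Prod.smul_mk, smul_add]

lemma matOp_one : matOp 1 0 0 1 = 1 := by
  apply V2_ext
  intro u v
  rw [matOp_apply]
  simp

/-- The four matrix-entry embeddings. -/
def e11 : Module.End ℂ R2 →ₗ[ℂ] Module.End ℂ V2 where
  toFun A := matOp A 0 0 0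
  map_add' A B := by simp [matOp_add]
  map_smul' c A := by simp [matOp_smul]
def e12 : Module.End ℂ R2 →ₗ[ℂ] Module.End ℂ V2 where
  toFun A := matOp 0 A 0 0
  map_add' A B := by simp [matOp_add]
  map_smul' c A := by simp [matOp_smul]
def e21 : Module.End ℂ R2 →ₗ[ℂ] Module.End ℂ V2 where
  toFun A := matOp 0 0 A 0
  map_add' A B := by simp [matOp_add]
  map_smul' c A := by simp [matOp_smul]
def e22 : Module.End ℂ R2 →ₗ[ℂ] Module.End ℂ V2 where
  toFun A := matOp 0 0 0 A
  map_add' A B := by simp [matOp_add]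
  map_smul' c A := by simp [matOp_smul]

lemma isMat_mul {P Q : Module.End ℂ V2} {k l : ℕ} (hP : IsMatDiffOpLE P k)
    (hQ : IsMatDiffOpLE Q l) : IsMatDiffOpLE (P * Q) (k + l) := by
  obtain ⟨A, B, C, D, hA, hB, hC, hD, rfl⟩ := hP
  obtain ⟨A', B', C', D', hA', hB', hC', hD', rfl⟩ := hQ
  rw [isDiffOpLE_iff] at *
  refine ⟨_, _, _, _, ?_, ?_, ?_, ?_, matOp_mul _ _ _ _ _ _ _ _⟩ <;> rw [isDiffOpLE_iff]
  · exact add_mem (OLT_mul hA hA') (OLT_mul hB hC')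
  · exact add_mem (OLT_mul hA hB') (OLT_mul hB hD')
  · exact add_mem (OLT_mul hC hA') (OLT_mul hD hC')
  · exact add_mem (OLT_mul hC hB') (OLT_mul hD hD')

lemma isMat_mono {P : Module.End ℂ V2} {k l : ℕ} (h : k ≤ l) (hP : IsMatDiffOpLE P k) :
    IsMatDiffOpLE P l := by
  obtain ⟨A, B, C, D, hA, hB, hC, hD, rfl⟩ := hP
  rw [isDiffOpLE_iff] at *
  have := OLT_mono (show k + 1 ≤ l + 1 by omega)
  exact ⟨A, B, C, D, (isDiffOpLE_iff _ _).2 (this hA), (isDiffOpLE_iff _ _).2 (this hB),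
    (isDiffOpLE_iff _ _).2 (this hC), (isDiffOpLE_iff _ _).2 (this hD), rfl⟩

lemma isMat_mk {A B C D : Module.End ℂ R2} {k : ℕ} (hA : A ∈ OLT (k + 1)) (hB : B ∈ OLT (k + 1))
    (hC : C ∈ OLT (k + 1)) (hD : D ∈ OLT (k + 1)) : IsMatDiffOpLE (matOp A B C D) k :=
  ⟨A, B, C, D, (isDiffOpLE_iff _ _).2 hA, (isDiffOpLE_iff _ _).2 hB,
    (isDiffOpLE_iff _ _).2 hC, (isDiffOpLE_iff _ _).2 hD, rfl⟩

/-- The span of generated operators. -/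
def SS (n Δ k : ℕ) : Submodule ℂ (Module.End ℂ V2) := Submodule.span ℂ (matProdsOrd k (Gtri n Δ))

lemma SS_mono {n Δ k l : ℕ} (h : k ≤ l) : SS n Δ k ≤ SS n Δ l := by
  apply Submodule.span_mono
  rintro P ⟨L, h1, h2, h3⟩
  exact ⟨L, h1, h2, isMat_mono h h3⟩

lemma SS_mul {n Δ k l : ℕ} {P Q : Module.End ℂ V2} (hP : P ∈ SS n Δ k) (hQ : Q ∈ SS n Δ l) :
    P * Q ∈ SS n Δ (k + l) := by
  have h := Submodule.mul_mem_mul hP hQ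
  rw [SS, SS, Submodule.span_mul_span] at h
  refine Submodule.span_mono ?_ h
  rintro _ ⟨_, ⟨L, h1, rfl, h3⟩, _, ⟨L', h1', rfl, h3'⟩, rfl⟩
  refine ⟨L ++ L', ?_, List.prod_append, isMat_mul h3 h3'⟩
  intro a ha
  rcases List.mem_append.1 ha with h | h
  · exact h1 a h
  · exact h1' a h

lemma SS_gen {n Δ k : ℕ} {P : Module.End ℂ V2} (hP : P ∈ Gtri n Δ) (h : IsMatDiffOpLE P k) :
    P ∈ SS n Δ k :=
  Submodule.subset_span ⟨[P], by simpa using hP, by simp, h⟩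

lemma one_OLT (k : ℕ) : (1 : Module.End ℂ R2) ∈ OLT (k + 1) := by
  have := mop_mem (g := 1) (i := 0) (j := 0) (K := k + 1) (by omega)
  simpa [mop, Mf_one] using this

lemma Mf_OLT (g : R2) (k : ℕ) : Mf g ∈ OLT (k + 1) := by
  have := mop_mem (g := g) (i := 0) (j := 0) (K := k + 1) (by omega)
  simpa [mop] using this

lemma MDx_OLT (g : R2) : Mf g * Dx ∈ OLT 2 := by
  have := mop_mem (g := g) (i := 1) (j := 0) (K := 2) (by omega)
  simpa [mop] using this

lemma MDy_OLT (g : R2) : Mf g * Dy ∈ OLT 2 := by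
  have := mop_mem (g := g) (i := 0) (j := 1) (K := 2) (by omega)
  simpa [mop] using this

lemma Ea_OLT (a : ℂ) : Ea a ∈ OLT 2 :=
  sub_mem (add_mem (MDx_OLT _) (MDy_OLT _)) (Submodule.smul_mem _ _ (one_OLT 1))

lemma FF_OLT (a : ℂ) (r : ℕ) : FF a r ∈ OLT (r + 1) := by
  induction r with
  | zero => exact one_OLT 0
  | succ r ih =>
    rw [FF, add_comm r 1]
    exact OLT_mul (k := 1) (Ea_OLT _) ih

lemma dg_SS {n Δ : ℕ} {A B : Module.End ℂ R2} (hG : dg A B ∈ Gtri n Δ) (hA : A ∈ OLT 2)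
    (hB : B ∈ OLT 2) : dg A B ∈ SS n Δ 1 :=
  SS_gen hG (isMat_mk hA (zero_mem _) (zero_mem _) hB)

lemma J1_OLT (a : ℂ) : J1 a ∈ OLT 2 :=
  sub_mem (add_mem (MDx_OLT _) (MDy_OLT _)) (Submodule.smul_mem _ _ (Mf_OLT _ 1))
lemma J2_OLT (a : ℂ) : J2 a ∈ OLT 2 :=
  sub_mem (add_mem (MDx_OLT _) (MDy_OLT _)) (Submodule.smul_mem _ _ (Mf_OLT _ 1))
lemma J3_OLT : J3 ∈ OLT 2 := MDx_OLT _
lemma J4_OLT : J4 ∈ OLT 2 := by simpa [Mf_one, J4] using MDx_OLT 1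
lemma J5_OLT : J5 ∈ OLT 2 := by simpa [Mf_one, J5] using MDy_OLT 1
lemma J6_OLT : J6 ∈ OLT 2 := MDy_OLT _
lemma J7_OLT (a : ℂ) : J7 a ∈ OLT 2 := sub_mem (MDx_OLT _) (Submodule.smul_mem _ _ (one_OLT 1))
lemma J8_OLT (a : ℂ) : J8 a ∈ OLT 2 := sub_mem (MDy_OLT _) (Submodule.smul_mem _ _ (one_OLT 1))

lemma Tg1_SS (n Δ : ℕ) : Tg1 n Δ ∈ SS n Δ 1 :=
  dg_SS (Or.inl (Or.inl (Or.inl (by simp [Tg1])))) (J1_OLT _) (J1_OLT _)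
lemma Tg2_SS (n Δ : ℕ) : Tg2 n Δ ∈ SS n Δ 1 :=
  dg_SS (Or.inl (Or.inl (Or.inl (by simp [Tg2])))) (J2_OLT _) (J2_OLT _)
lemma Tg3_SS (n Δ : ℕ) : Tg3 ∈ SS n Δ 1 :=
  dg_SS (Or.inl (Or.inl (Or.inl (by simp [Tg3])))) J3_OLT J3_OLT
lemma Tg4_SS (n Δ : ℕ) : Tg4 ∈ SS n Δ 1 :=
  dg_SS (Or.inl (Or.inl (Or.inl (by simp [Tg4])))) J4_OLT J4_OLT
lemma Tg5_SS (n Δ : ℕ) : Tg5 ∈ SS n Δ 1 :=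
  dg_SS (Or.inl (Or.inl (Or.inl (by simp [Tg5])))) J5_OLT J5_OLT
lemma Tg6_SS (n Δ : ℕ) : Tg6 ∈ SS n Δ 1 :=
  dg_SS (Or.inl (Or.inl (Or.inl (by simp [Tg6])))) J6_OLT J6_OLT
lemma Tg7_SS (n Δ : ℕ) : Tg7 n Δ ∈ SS n Δ 1 :=
  dg_SS (Or.inl (Or.inl (Or.inl (by simp [Tg7])))) (J7_OLT _) (J7_OLT _)
lemma Tg8_SS (n Δ : ℕ) : Tg8 n Δ ∈ SS n Δ 1 :=
  dg_SS (Or.inl (Or.inl (Or.inl (by simp [Tg8])))) (J8_OLT _) (J8_OLT _)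

/-- Abstract left-stability from an embedding `e` intertwining with `dg`. -/
lemma stab_aux {n Δ : ℕ} {e : Module.End ℂ R2 →ₗ[ℂ] Module.End ℂ V2} {J J' K : Module.End ℂ R2}
    (he : ∀ A, dg J J' * e A = e (K * A)) (hS : dg J J' ∈ SS n Δ 1) (m : ℕ)
    (A : Module.End ℂ R2) (hA : A ∈ (SS n Δ m).comap e) : K * A ∈ (SS n Δ (m + 1)).comap e := by
  rw [Submodule.mem_comap] at *
  rw [← he, add_comm]
  exact SS_mul hS hA

lemma LStab_row1 {n Δ : ℕ} {e : Module.End ℂ R2 →ₗ[ℂ] Module.End ℂ V2}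
    (he : ∀ J J' A, dg J J' * e A = e (J * A)) :
    LStab (n - Δ) (fun m => (SS n Δ m).comap e) where
  mono m := Submodule.comap_mono (SS_mono (by omega))
  j1 := stab_aux (he _ _) (Tg1_SS n Δ)
  j2 := stab_aux (he _ _) (Tg2_SS n Δ)
  j3 := stab_aux (he _ _) (Tg3_SS n Δ)
  j4 := stab_aux (he _ _) (Tg4_SS n Δ)
  j5 := stab_aux (he _ _) (Tg5_SS n Δ)
  j6 := stab_aux (he _ _) (Tg6_SS n Δ)
  j7 := stab_aux (he _ _) (Tg7_SS n Δ)
  j8 := stab_aux (he _ _) (Tg8_SS n Δ)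

lemma LStab_row2 {n Δ : ℕ} {e : Module.End ℂ R2 →ₗ[ℂ] Module.End ℂ V2}
    (he : ∀ J J' A, dg J J' * e A = e (J' * A)) :
    LStab n (fun m => (SS n Δ m).comap e) where
  mono m := Submodule.comap_mono (SS_mono (by omega))
  j1 := stab_aux (he _ _) (Tg1_SS n Δ)
  j2 := stab_aux (he _ _) (Tg2_SS n Δ)
  j3 := stab_aux (he _ _) (Tg3_SS n Δ)
  j4 := stab_aux (he _ _) (Tg4_SS n Δ)
  j5 := stab_aux (he _ _) (Tg5_SS n Δ)
  j6 := stab_aux (he _ _) (Tg6_SS n Δ)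
  j7 := stab_aux (he _ _) (Tg7_SS n Δ)
  j8 := stab_aux (he _ _) (Tg8_SS n Δ)

lemma Qgm_SS (n Δ α β : ℕ) (h : α + β ≤ Δ) : e21 (Mf (Xv ^ α * Yv ^ β)) ∈ SS n Δ 0 :=
  SS_gen (P := Qgm α β) (Or.inl (Or.inl (Or.inr ⟨α, β, h, rfl⟩)))
    (isMat_mk (zero_mem _) (zero_mem _) (Mf_OLT _ 0) (zero_mem _))

lemma Qgp_SS (n Δ i j r : ℕ) (hΔ : Δ ≤ n) (h : i + j + r = Δ) :
    e12 (mop 1 i j * FF (n : ℂ) r) ∈ SS n Δ Δ := by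
  rw [← qbar_eq n Δ i j r hΔ h]
  refine SS_gen (P := Qgp n Δ i j) (Or.inl (Or.inr ⟨i, j, by omega, rfl⟩))
    (isMat_mk (zero_mem _) ?_ (zero_mem _) (zero_mem _))
  rw [qbar_eq n Δ i j r hΔ h]
  have := OLT_mul (k := i + j) (mop_mem (g := 1) (i := i) (j := j) (by omega)) (FF_OLT (n : ℂ) r)
  rwa [h] at this

lemma one_SS (n Δ : ℕ) : (1 : Module.End ℂ V2) ∈ SS n Δ 0 := by
  refine SS_gen (Or.inr rfl) ?_
  rw [← matOp_one]
  exact isMat_mk (one_OLT 0) (zero_mem _) (zero_mem _) (one_OLT 0)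

lemma proj1_SS (n Δ : ℕ) (hΔ : Δ ≤ n) : e11 1 ∈ SS n Δ 0 := by
  by_cases h0 : Δ = 0
  · subst h0
    have h1 := Qgm_SS n 0 0 0 (by omega)
    have h2 := Qgp_SS n 0 0 0 0 hΔ rfl
    have h3 := SS_mul h2 h1
    have h4 : e12 (mop 1 0 0 * FF (n : ℂ) 0) * e21 (Mf (Xv ^ 0 * Yv ^ 0)) = e11 1 := by
      show matOp _ _ _ _ * matOp _ _ _ _ = matOp _ _ _ _
      rw [matOp_mul]
      simp [mop, Mf_one, FF]
    rwa [h4] at h3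
  · have hJ : Jgen n Δ ∈ SS n Δ 0 := by
      refine SS_gen (Or.inl (Or.inl (Or.inl (by simp)))) ?_
      exact isMat_mk (Submodule.smul_mem _ _ (one_OLT 0)) (zero_mem _) (zero_mem _)
        (Submodule.smul_mem _ _ (one_OLT 0))
    have h1 : e11 1 = ((3 : ℂ) / (2 * Δ)) • (Jgen n Δ + (-(n : ℂ) / 3) • 1) := by
      have hd : (Δ : ℂ) ≠ 0 := by exact_mod_cast h0
      rw [← matOp_one, Jgen, dg, matOp_smul, matOp_add, matOp_smul]
      show matOp _ _ _ _ = _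
      congr 1
      · rw [← add_smul, smul_smul]
        rw [show (3 : ℂ) / (2 * Δ) * ((n + 2 * Δ) / 3 + -n / 3) = 1 by field_simp; ring, one_smul]
      · simp
      · simp
      · rw [← add_smul, smul_smul]
        rw [show (3 : ℂ) / (2 * Δ) * (n / 3 + -n / 3) = 0 by ring, zero_smul]
    rw [h1]
    exact Submodule.smul_mem _ _ (add_mem hJ (Submodule.smul_mem _ _ (one_SS n Δ)))

lemma proj2_SS (n Δ : ℕ) (hΔ : Δ ≤ n) : e22 1 ∈ SS n Δ 0 := by
  have h : e22 1 = 1 + (-1 : ℂ) • e11 1 := by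
    rw [← matOp_one]
    show matOp _ _ _ _ = _ + (-1 : ℂ) • matOp _ _ _ _
    rw [matOp_smul, matOp_add]
    have h0 : (1 : Module.End ℂ R2) + (-1 : ℂ) • 1 = 0 :=
      LinearMap.ext fun p => by
        simp only [LinearMap.add_apply, LinearMap.smul_apply, LinearMap.zero_apply]
        module
    rw [h0]
    simp
  rw [h]
  exact add_mem (one_SS n Δ) (Submodule.smul_mem _ _ (proj1_SS n Δ hΔ))

theorem stmt16 (n Δ k : ℕ) (hΔ : Δ ≤ n)
    (f11 f12 f21 f22 : ℕ × ℕ → R2)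
    (h11 : ∀ ij : ℕ × ℕ, k < ij.1 + ij.2 → f11 ij = 0)
    (h12 : ∀ ij : ℕ × ℕ, k < ij.1 + ij.2 → f12 ij = 0)
    (h21 : ∀ ij : ℕ × ℕ, k < ij.1 + ij.2 → f21 ij = 0)
    (h22 : ∀ ij : ℕ × ℕ, k < ij.1 + ij.2 → f22 ij = 0)
    (T : Module.End ℂ V2)
    (hT : T = matOp (diffOp (tIdx (n - Δ)) f11) (diffOp (tIdx n) f12)
                    (diffOp (tIdx (n - Δ)) f21) (diffOp (tIdx n) f22))
    (hpres : ∀ w ∈ (Tmod (n - Δ)).prod (Tmod n),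
      T w ∈ (Tmod (n - Δ)).prod (Tmod n)) :
    T ∈ Submodule.span ℂ (matProdsOrd k (Gtri n Δ)) := by

  have hsplit : ∀ A B C D : Module.End ℂ R2, matOp A B C D = e11 A + e12 B + e21 C + e22 D := by
    intro A B C D
    show _ = matOp _ _ _ _ + matOp _ _ _ _ + matOp _ _ _ _ + matOp _ _ _ _
    simp [matOp_add]
  have hm1 : ∀ p ∈ Tmod (n - Δ), diffOp (tIdx (n - Δ)) f11 p ∈ Tmod (n - Δ) ∧
      diffOp (tIdx (n - Δ)) f21 p ∈ Tmod n := by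
    intro p hp
    have h := hpres (p, 0) ⟨hp, zero_mem _⟩
    rw [hT, matOp_apply] at h
    simpa using h
  have hm2 : ∀ p ∈ Tmod n, diffOp (tIdx n) f12 p ∈ Tmod (n - Δ) ∧
      diffOp (tIdx n) f22 p ∈ Tmod n := by
    intro p hp
    have h := hpres (0, p) ⟨zero_mem _, hp⟩
    rw [hT, matOp_apply] at h
    simpa using h
  have c11 := scalar_main (n - Δ) (n - Δ) 0 k (fun m => (SS n Δ m).comap e11) (by omega)
    (LStab_row1 (fun J J' A => by
      show matOp _ _ _ _ * matOp _ _ _ _ = matOp _ _ _ _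
      rw [matOp_mul]; simp)) (Or.inl rfl) (fun s t i j r h1 h2 => by
      obtain ⟨rfl, rfl, rfl⟩ : i = 0 ∧ j = 0 ∧ r = 0 := by omega
      obtain ⟨rfl, rfl⟩ : s = 0 ∧ t = 0 := by omega
      simpa [mop, Mf_one, FF] using proj1_SS n Δ hΔ) f11 h11 (fun p hp => (hm1 p hp).1)
  have c22 := scalar_main n n 0 k (fun m => (SS n Δ m).comap e22) (by omega)
    (LStab_row2 (fun J J' A => by
      show matOp _ _ _ _ * matOp _ _ _ _ = matOp _ _ _ _
      rw [matOp_mul]; simp)) (Or.inl rfl) (fun s t i j r h1 h2 => by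
      obtain ⟨rfl, rfl, rfl⟩ : i = 0 ∧ j = 0 ∧ r = 0 := by omega
      obtain ⟨rfl, rfl⟩ : s = 0 ∧ t = 0 := by omega
      simpa [mop, Mf_one, FF] using proj2_SS n Δ hΔ) f22 h22 (fun p hp => (hm2 p hp).2)
  have c21 := scalar_main (n - Δ) n 0 k (fun m => (SS n Δ m).comap e21) (by omega)
    (LStab_row2 (fun J J' A => by
      show matOp _ _ _ _ * matOp _ _ _ _ = matOp _ _ _ _
      rw [matOp_mul]; simp)) (Or.inl rfl) (fun s t i j r h1 h2 => by
      obtain ⟨rfl, rfl, rfl⟩ : i = 0 ∧ j = 0 ∧ r = 0 := by omega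
      simpa [mop, Mf_one, FF] using Qgm_SS n Δ s t (by omega)) f21 h21 (fun p hp => (hm1 p hp).2)
  have c12 := scalar_main n (n - Δ) Δ k (fun m => (SS n Δ m).comap e12) (by omega)
    (LStab_row1 (fun J J' A => by
      show matOp _ _ _ _ * matOp _ _ _ _ = matOp _ _ _ _
      rw [matOp_mul]; simp)) (Or.inr (by omega)) (fun s t i j r h1 h2 => by
      obtain ⟨rfl, rfl⟩ : s = 0 ∧ t = 0 := by omega
      simpa using Qgp_SS n Δ i j r hΔ h1) f12 h12 (fun p hp => (hm2 p hp).1)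
  rw [hT, hsplit]
  exact add_mem (add_mem (add_mem c11 c12) c21) c22
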